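/- Let γ > 3/2. There exists a constant C = C(γ) such that the following holds. Let ε ∈ (0, 1] and let ρ : ℝ³ → [0, ∞) be measurable with ∫_E |ρ(x) − 1|^γ dx ≤ ε², where E := {x ∈ ℝ³ : |ρ(x) − 1| ≥ 1/2}. Then the Lebesgue measure of E is at most 2^γ ε², and for every f ∈ C_c^∞(ℝ³; ℝ³): ∫_E |f(x)|² dx ≤ C ε^{4/3} ∫_{ℝ³} |∇f(x)|² dx. -/

import Mathlib

open MeasureTheory

open Module
open scoped ENNReal NNReal

/-!
Chebyshev's inequality bounds the measure of `E` by a multiple of `ε²`. In dimension `n > p`,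
Hölder's inequality on `E` between `Lᵖ` and `Lᵖ'`, with the Sobolev exponent
`1/p' = 1/p - 1/n`, costs a factor `|E|^(1/n)`, and Sobolev's inequality bounds the `Lᵖ'` norm by
the `Lᵖ` norm of the gradient. Raising to the power `p` gives the factor `(ε²)^(p/n)`, which is
`ε^(4/3)` for `p = 2` and `n = 3`. The gradient is measured in operator norm, which is at most
the Frobenius norm.
-/

section Chebyshev

variable {α : Type*} [MeasurableSpace α] {μ : Measure α} {g : α → ℝ} {γ δ : ℝ}

theorem measure_setOf_le_abs_le_mul_setLIntegral_rpow (hg : AEMeasurable g μ) (hγ : 0 ≤ γ)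
    (hδ : 0 < δ) :
    μ {x | δ ≤ |g x|} ≤
      ENNReal.ofReal (δ⁻¹ ^ γ) * ∫⁻ x in {x | δ ≤ |g x|}, ENNReal.ofReal (|g x| ^ γ) ∂μ := by
  have hE : NullMeasurableSet {x | δ ≤ |g x|} μ :=
    nullMeasurableSet_le aemeasurable_const hg.norm
  have one_le : ∀ x ∈ {x | δ ≤ |g x|},
      1 ≤ ENNReal.ofReal (δ⁻¹ ^ γ) * ENNReal.ofReal (|g x| ^ γ) := by
    intro x hx
    rw [← ENNReal.ofReal_mul (by positivity), ← Real.mul_rpow (by positivity) (abs_nonneg _),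
      ENNReal.one_le_ofReal]
    exact Real.one_le_rpow ((one_le_inv_mul₀ hδ).2 hx) hγ
  calc μ {x | δ ≤ |g x|}
      = ∫⁻ _ in {x | δ ≤ |g x|}, 1 ∂μ := (setLIntegral_one _).symm
    _ ≤ ∫⁻ x in {x | δ ≤ |g x|}, ENNReal.ofReal (δ⁻¹ ^ γ) * ENNReal.ofReal (|g x| ^ γ) ∂μ :=
        lintegral_mono_ae ((ae_restrict_mem₀ hE).mono one_le)
    _ = _ := lintegral_const_mul' _ _ ENNReal.ofReal_ne_top

end Chebyshev

section LpNorm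

variable {α F : Type*} [MeasurableSpace α] [NormedAddCommGroup F] {μ : Measure α} {f : α → F}

theorem lpNorm_rpow_eq_integral_norm_rpow {p : ℝ≥0} (hp : p ≠ 0)
    (hf : AEStronglyMeasurable f μ) :
    lpNorm f p μ ^ (p : ℝ) = ∫ x, ‖f x‖ ^ (p : ℝ) ∂μ := by
  rw [lpNorm_nnreal_eq_integral_norm_rpow hp hf,
    Real.rpow_inv_rpow (integral_nonneg fun x => by positivity) (by exact_mod_cast hp)]

theorem eLpNorm_restrict_le_eLpNorm_mul_rpow_measure {p q : ℝ≥0∞} (hpq : p ≤ q)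
    (hf : AEStronglyMeasurable f μ) (s : Set α) :
    eLpNorm f p (μ.restrict s) ≤ eLpNorm f q μ * μ s ^ (1 / p.toReal - 1 / q.toReal) := by
  calc eLpNorm f p (μ.restrict s)
      ≤ eLpNorm f q (μ.restrict s) * μ s ^ (1 / p.toReal - 1 / q.toReal) := by
        simpa only [Measure.restrict_apply_univ] using
          eLpNorm_le_eLpNorm_mul_rpow_measure_univ hpq hf.restrict
    _ ≤ eLpNorm f q μ * μ s ^ (1 / p.toReal - 1 / q.toReal) := by
        gcongr
        exact Measure.restrict_le_self

end LpNorm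

section Sobolev

variable {V F : Type*} [NormedAddCommGroup V] [NormedSpace ℝ V] [FiniteDimensional ℝ V]
  [MeasurableSpace V] [BorelSpace V] [NormedAddCommGroup F] [InnerProductSpace ℝ F]
  (μ : Measure V) [μ.IsAddHaarMeasure] {f : V → F} {p : ℝ≥0}

theorem eLpNorm_restrict_le_eLpNorm_fderiv_mul_rpow_measure (hf : ContDiff ℝ 1 f)
    (hfs : HasCompactSupport f) (hp : 1 ≤ p) (hpn : p < finrank ℝ V) (s : Set V) :
    eLpNorm f p (μ.restrict s) ≤
      eLpNormLESNormFDerivOfEqInnerConst μ p * eLpNorm (fderiv ℝ f) p μ *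
        μ s ^ (finrank ℝ V : ℝ)⁻¹ := by
  have hp_pos : 0 < p := zero_lt_one.trans_le hp
  have hn_inv_le : (finrank ℝ V : ℝ≥0)⁻¹ < p⁻¹ := inv_strictAnti₀ hp_pos hpn
  obtain ⟨q, hq⟩ : ∃ q : ℝ≥0, q⁻¹ = p⁻¹ - (finrank ℝ V : ℝ≥0)⁻¹ := ⟨_, inv_inv _⟩
  have hq_coe : (q : ℝ)⁻¹ = (p : ℝ)⁻¹ - (finrank ℝ V : ℝ)⁻¹ := by
    simpa [NNReal.coe_sub hn_inv_le.le] using congrArg NNReal.toReal hq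
  have hpq : p ≤ q := by
    have hq_pos : 0 < q := inv_pos.1 (hq ▸ tsub_pos_of_lt hn_inv_le)
    exact (inv_le_inv₀ hq_pos hp_pos).1 (hq ▸ tsub_le_self)
  have hexponent : 1 / (p : ℝ≥0∞).toReal - 1 / (q : ℝ≥0∞).toReal = (finrank ℝ V : ℝ)⁻¹ := by
    simp only [ENNReal.coe_toReal, one_div, hq_coe, sub_sub_cancel]
  calc eLpNorm f p (μ.restrict s)
      ≤ eLpNorm f q μ * μ s ^ (finrank ℝ V : ℝ)⁻¹ := hexponent ▸
        eLpNorm_restrict_le_eLpNorm_mul_rpow_measure (by exact_mod_cast hpq)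
          hf.continuous.aestronglyMeasurable s
    _ ≤ _ := by
        gcongr
        exact eLpNorm_le_eLpNorm_fderiv_of_eq_inner μ hf hfs hp
          (Nat.cast_pos.1 (hp_pos.trans hpn)) hq_coe

theorem lpNorm_restrict_le_lpNorm_fderiv_mul_rpow_measure (hf : ContDiff ℝ 1 f)
    (hfs : HasCompactSupport f) (hp : 1 ≤ p) (hpn : p < finrank ℝ V) {s : Set V}
    (hs : μ s ≠ ∞) :
    lpNorm f p (μ.restrict s) ≤
      eLpNormLESNormFDerivOfEqInnerConst μ p * lpNorm (fderiv ℝ f) p μ *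
        μ.real s ^ (finrank ℝ V : ℝ)⁻¹ := by
  have hdf : MemLp (fderiv ℝ f) p μ :=
    (hf.continuous_fderiv one_ne_zero).memLp_of_hasCompactSupport (hfs.fderiv ℝ)
  have hbound_ne_top : eLpNormLESNormFDerivOfEqInnerConst μ p * eLpNorm (fderiv ℝ f) p μ *
      μ s ^ (finrank ℝ V : ℝ)⁻¹ ≠ ∞ := by
    have := hdf.eLpNorm_ne_top
    finiteness
  simpa only [ENNReal.toReal_mul, ENNReal.coe_toReal, ← ENNReal.toReal_rpow,
    toReal_eLpNorm hf.continuous.aestronglyMeasurable, toReal_eLpNorm hdf.1, Measure.real] using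
    ENNReal.toReal_mono hbound_ne_top
      (eLpNorm_restrict_le_eLpNorm_fderiv_mul_rpow_measure μ hf hfs hp hpn s)

theorem setIntegral_norm_rpow_le_integral_norm_fderiv_rpow (hf : ContDiff ℝ 1 f)
    (hfs : HasCompactSupport f) (hp : 1 ≤ p) (hpn : p < finrank ℝ V) {s : Set V}
    (hs : μ s ≠ ∞) :
    ∫ x in s, ‖f x‖ ^ (p : ℝ) ∂μ ≤
      eLpNormLESNormFDerivOfEqInnerConst μ p ^ (p : ℝ) * μ.real s ^ (p / finrank ℝ V : ℝ) *
        ∫ x, ‖fderiv ℝ f x‖ ^ (p : ℝ) ∂μ := by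
  have hp_ne : p ≠ 0 := (zero_lt_one.trans_le hp).ne'
  rw [← lpNorm_rpow_eq_integral_norm_rpow hp_ne hf.continuous.aestronglyMeasurable,
    ← lpNorm_rpow_eq_integral_norm_rpow hp_ne
      (hf.continuous_fderiv one_ne_zero).aestronglyMeasurable]
  calc lpNorm f p (μ.restrict s) ^ (p : ℝ)
      ≤ (eLpNormLESNormFDerivOfEqInnerConst μ p * lpNorm (fderiv ℝ f) p μ *
          μ.real s ^ (finrank ℝ V : ℝ)⁻¹) ^ (p : ℝ) := by
        gcongr
        · exact lpNorm_nonneg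
        · exact lpNorm_restrict_le_lpNorm_fderiv_mul_rpow_measure μ hf hfs hp hpn hs
    _ = _ := by
        have hdf_nonneg : 0 ≤ lpNorm (fderiv ℝ f) p μ := lpNorm_nonneg
        rw [Real.mul_rpow (by positivity) (by positivity),
          Real.mul_rpow (by positivity) hdf_nonneg, ← Real.rpow_mul measureReal_nonneg,
          inv_mul_eq_div, mul_right_comm]

theorem stmt_13_general {γ δ : ℝ} (hγ : 0 ≤ γ) (hδ : 0 < δ) (hp : 1 ≤ p)
    (hpn : p < finrank ℝ V) :
    ∃ C : ℝ, 0 < C ∧ ∀ ε : ℝ, 0 ≤ ε → ∀ g : V → ℝ, AEMeasurable g μ →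
      (∫⁻ x in {x | δ ≤ |g x|}, ENNReal.ofReal (|g x| ^ γ) ∂μ) ≤ ENNReal.ofReal (ε ^ 2) →
      μ {x | δ ≤ |g x|} ≤ ENNReal.ofReal (δ⁻¹ ^ γ * ε ^ 2) ∧
      ∀ f : V → F, ContDiff ℝ 1 f → HasCompactSupport f →
        (∫ x in {x | δ ≤ |g x|}, ‖f x‖ ^ (p : ℝ) ∂μ) ≤
          C * ε ^ (2 * p / finrank ℝ V : ℝ) * ∫ x, ‖fderiv ℝ f x‖ ^ (p : ℝ) ∂μ := by
  set S : ℝ≥0 := eLpNormLESNormFDerivOfEqInnerConst μ p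
  -- `S` comes without a proof that it is nonzero, so the summand `1` makes the constant positive.
  refine ⟨(S ^ (p : ℝ) + 1) * (δ⁻¹ ^ γ) ^ (p / finrank ℝ V : ℝ), by positivity,
    fun ε hε g hg hint => ?_⟩
  have hmeasure : μ {x | δ ≤ |g x|} ≤ ENNReal.ofReal (δ⁻¹ ^ γ * ε ^ 2) := by
    rw [ENNReal.ofReal_mul (by positivity)]
    exact (measure_setOf_le_abs_le_mul_setLIntegral_rpow hg hγ hδ).trans (by gcongr)
  refine ⟨hmeasure, fun f hf hfs => ?_⟩
  calc ∫ x in {x | δ ≤ |g x|}, ‖f x‖ ^ (p : ℝ) ∂μ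
      ≤ S ^ (p : ℝ) * μ.real {x | δ ≤ |g x|} ^ (p / finrank ℝ V : ℝ) *
          ∫ x, ‖fderiv ℝ f x‖ ^ (p : ℝ) ∂μ :=
        setIntegral_norm_rpow_le_integral_norm_fderiv_rpow μ hf hfs hp hpn
          (ne_top_of_le_ne_top ENNReal.ofReal_ne_top hmeasure)
    _ ≤ (S ^ (p : ℝ) + 1) * (δ⁻¹ ^ γ * ε ^ 2) ^ (p / finrank ℝ V : ℝ) *
          ∫ x, ‖fderiv ℝ f x‖ ^ (p : ℝ) ∂μ := by
        gcongr
        · exact le_add_of_nonneg_right zero_le_one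
        · exact ENNReal.toReal_le_of_le_ofReal (by positivity) hmeasure
    _ = _ := by
        rw [Real.mul_rpow (by positivity) (by positivity), ← Real.rpow_natCast_mul hε, ← mul_assoc,
          Nat.cast_ofNat, mul_div_assoc]

end Sobolev

/-- With `γ > 3/2`, there is `C = C(γ)` such that if `ε ∈ (0,1]` and
`∫_E |ρ−1|^γ ≤ ε²` where `E = {|ρ−1| ≥ 1/2}`, then `|E| ≤ 2^γ ε²` and for every
`f ∈ C_c^∞(ℝ³;ℝ³)`: `∫_E |f|² ≤ C ε^{4/3} ∫ |∇f|²`. -/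
theorem stmt_13 (γ : ℝ) (hγ : 3 / 2 < γ) :
    ∃ C : ℝ, 0 < C ∧ ∀ ε : ℝ, ε ∈ Set.Ioc (0 : ℝ) 1 →
      ∀ ρ : EuclideanSpace ℝ (Fin 3) → ℝ, Measurable ρ → (∀ x, 0 ≤ ρ x) →
      (∫⁻ x in {x | 1 / 2 ≤ |ρ x - 1|}, ENNReal.ofReal (|ρ x - 1| ^ γ))
          ≤ ENNReal.ofReal (ε ^ 2) →
      volume {x | 1 / 2 ≤ |ρ x - 1|} ≤ ENNReal.ofReal ((2 : ℝ) ^ γ * ε ^ 2) ∧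
      ∀ f : EuclideanSpace ℝ (Fin 3) → EuclideanSpace ℝ (Fin 3),
        ContDiff ℝ (⊤ : ℕ∞) f → HasCompactSupport f →
        (∫ x in {x | 1 / 2 ≤ |ρ x - 1|}, ‖f x‖ ^ 2)
          ≤ C * ε ^ ((4 : ℝ) / 3) * ∫ x, ‖fderiv ℝ f x‖ ^ 2 := by
  obtain ⟨C, hC, hbound⟩ := stmt_13_general (F := EuclideanSpace ℝ (Fin 3))
    (volume : Measure (EuclideanSpace ℝ (Fin 3))) (p := 2) (γ := γ) (by linarith)
    one_half_pos one_le_two (by norm_num)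
  norm_num only [finrank_euclideanSpace_fin, NNReal.coe_ofNat, Nat.cast_ofNat, Real.rpow_ofNat,
    one_div, inv_inv] at hbound ⊢
  exact ⟨C, hC, fun ε hε ρ hρ _ hint =>
    (hbound ε hε.1.le _ (hρ.sub_const 1).aemeasurable hint).imp_right
      fun h f hf => h f (hf.of_le (by exact_mod_cast le_top))⟩
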